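/- arXiv:1406.6851 — 2 statements merged into one kernel-verified Lean document; each statement's English description precedes it below -/
import Mathlib

section
/- The set of 34 congruences with (residue, modulus) pairs {(1,2),(0,4),(2,8),(0,11),(2,13),(6,16),(20,22),(20,26),(30,32),(34,44),(6,52),(46,64),(14,88),(38,104),(14,128),(138,143),(62,176),(30,208),(78,256),(94,286),(142,352),(206,416),(226,572),(654,704),(14,832),(1062,1144),(206,1408),(78,1664),(1214,2288),(2510,2816),(2766,3328),(334,4576),(4558,9152),(7374,18304)} is a covering system of the integers; hence L = 2^8 · 11 · 13 is a covering number. -/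
/-- A finite set of congruences `(x, m)` covers all the integers. -/
def CoversAll (S : Finset (ℕ × ℕ)) : Prop :=
  ∀ z : ℤ, ∃ c ∈ S, (c.2 : ℤ) ∣ z - (c.1 : ℤ)

/-- The moduli appearing in `S` are pairwise distinct. -/
def DistinctModuli (S : Finset (ℕ × ℕ)) : Prop :=
  ∀ c ∈ S, ∀ c' ∈ S, c.2 = c'.2 → c = c'

/-- `L` is a covering number: there is a covering system whose moduli are
distinct divisors of `L` greater than `1`. -/
def IsCoveringNumber (L : ℕ) : Prop :=
  ∃ S : Finset (ℕ × ℕ), CoversAll S ∧ DistinctModuli S ∧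
    ∀ c ∈ S, 1 < c.2 ∧ c.2 ∣ L

/-- `L` is a primitive covering number. -/
def IsPrimitiveCoveringNumber (L : ℕ) : Prop :=
  IsCoveringNumber L ∧ ∀ d : ℕ, d ∣ L → d ≠ L → ¬ IsCoveringNumber d

/-!
An integer `z ≢ a [ZMOD 2 ^ n]` first differs from `a` in some binary digit `i < n`, so the classes
`a + 2 ^ i` modulo `2 ^ (i + 1)` cover everything outside the class of `a` modulo `2 ^ n`. With
`a = 206` and `n = 8` these are the eight congruences whose modulus is a power of two.

On the remaining class, write `z = 206 + 256 * y`: a congruence with modulus `2 ^ k * d`, `d` odd,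
then becomes a congruence on `y` modulo `d`. The nine with `d = 11` miss only the residues `3, 6`
modulo `11`, and the nine with `d = 13` miss only `2, 4, 7, 8` modulo `13`. By the Chinese remainder
theorem this leaves `2 * 4 = 8` residues modulo `143`, one for each of the eight congruences with
`d = 143`.
-/

theorem modEq_two_pow_or_exists_modEq_add_two_pow (a z : ℤ) (n : ℕ) :
    z ≡ a [ZMOD 2 ^ n] ∨ ∃ i < n, z ≡ a + 2 ^ i [ZMOD 2 ^ (i + 1)] := by
  induction n with
  | zero => exact .inl (by simpa only [pow_zero] using Int.modEq_one)
  | succ n ih =>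
    obtain hz | ⟨i, hi, hz⟩ := ih
    · obtain ⟨t, rfl⟩ := Int.modEq_iff_add_fac.mp hz.symm
      obtain ⟨s, rfl | rfl⟩ := Int.even_or_odd' t
      · exact .inl (Int.modEq_iff_add_fac.mpr ⟨s, by ring⟩).symm
      · exact .inr ⟨n, n.lt_succ_self, (Int.modEq_iff_add_fac.mpr ⟨s, by ring⟩).symm⟩
    · exact .inr ⟨i, hi.trans n.lt_succ_self, hz⟩

/-- The residue class of `r` modulo `m` is contained in a single congruence of `S`. Containment is
encoded as divisibility of moduli together with a congruence, which makes it decidable. -/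
def CoversClass (S : Finset (ℕ × ℕ)) (r : ℤ) (m : ℕ) : Prop :=
  ∃ c ∈ S, c.2 ∣ m ∧ r ≡ c.1 [ZMOD c.2]

instance (S : Finset (ℕ × ℕ)) (r : ℤ) (m : ℕ) : Decidable (CoversClass S r m) :=
  inferInstanceAs (Decidable (∃ c ∈ S, c.2 ∣ m ∧ r ≡ c.1 [ZMOD c.2]))

section Sieve

variable {S : Finset (ℕ × ℕ)} {a r r' : ℤ} {m n p q Q : ℕ}

theorem CoversClass.congr (h : CoversClass S r m) (hr : r' ≡ r [ZMOD m]) : CoversClass S r' m :=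
  let ⟨c, hcS, hcm, hrc⟩ := h
  ⟨c, hcS, hcm, (hr.of_dvd (Int.natCast_dvd_natCast.mpr hcm)).trans hrc⟩

theorem coversAll_of_forall_exists_coversClass (h : ∀ z, ∃ m, CoversClass S z m) : CoversAll S :=
  fun z ↦
    let ⟨_, c, hcS, _, hzc⟩ := h z
    ⟨c, hcS, hzc.symm.dvd⟩

theorem coversAll_of_coversClass_two_pow
    (hpow : ∀ i < n, CoversClass S (a + 2 ^ i) (2 ^ (i + 1)))
    (hclass : ∀ y : ℤ, ∃ m, CoversClass S (a + (2 ^ n : ℕ) * y) m) : CoversAll S := by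
  refine coversAll_of_forall_exists_coversClass fun z ↦ ?_
  obtain hz | ⟨i, hi, hz⟩ := modEq_two_pow_or_exists_modEq_add_two_pow a z n
  · obtain ⟨y, rfl⟩ := Int.modEq_iff_add_fac.mp hz.symm
    exact mod_cast hclass y
  · exact ⟨2 ^ (i + 1), (hpow i hi).congr (mod_cast hz)⟩

theorem CoversClass.of_forall_lt {R : ℤ → Prop} (hm : 0 < m)
    (h : ∀ j ∈ Finset.Ico (0 : ℤ) m, R j → CoversClass S (a + Q * j) (Q * m)) (y : ℤ)
    (hy : R (y % m)) : CoversClass S (a + Q * y) (Q * m) := by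
  have hmem : y % m ∈ Finset.Ico (0 : ℤ) m :=
    Finset.mem_Ico.mpr ⟨Int.emod_nonneg y (by lia), Int.emod_lt_of_pos y (by lia)⟩
  refine (h _ hmem hy).congr ?_
  rw [Nat.cast_mul]
  exact (Int.mod_modEq y m).symm.mul_left'.add_left a

theorem exists_coversClass_add_mul {A B : Finset ℤ} (hp : 0 < p) (hq : 0 < q)
    (hA : ∀ j ∈ Finset.Ico (0 : ℤ) p, j ∉ A → CoversClass S (a + Q * j) (Q * p))
    (hB : ∀ j ∈ Finset.Ico (0 : ℤ) q, j ∉ B → CoversClass S (a + Q * j) (Q * q))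
    (hAB : ∀ j ∈ Finset.Ico (0 : ℤ) (p * q : ℕ), j % p ∈ A ∧ j % q ∈ B →
      CoversClass S (a + Q * j) (Q * (p * q)))
    (y : ℤ) : ∃ m, CoversClass S (a + Q * y) m := by
  by_cases hyA : y % p ∈ A
  · by_cases hyB : y % q ∈ B
    · refine ⟨_, CoversClass.of_forall_lt (Nat.mul_pos hp hq) hAB y ⟨?_, ?_⟩⟩
      · rwa [Int.emod_emod_of_dvd y (Int.natCast_dvd_natCast.mpr (Nat.dvd_mul_right p q))]
      · rwa [Int.emod_emod_of_dvd y (Int.natCast_dvd_natCast.mpr (Nat.dvd_mul_left q p))]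
    · exact ⟨_, CoversClass.of_forall_lt hq hB y hyB⟩
  · exact ⟨_, CoversClass.of_forall_lt hp hA y hyA⟩

end Sieve

/-- The covering system with moduli dividing `36608`, listed by increasing modulus. -/
def system36608 : Finset (ℕ × ℕ) :=
  {(1,2),(0,4),(2,8),(0,11),(2,13),(6,16),(20,22),(20,26),(30,32),
    (34,44),(6,52),(46,64),(14,88),(38,104),(14,128),(138,143),(62,176),
    (30,208),(78,256),(94,286),(142,352),(206,416),(226,572),(654,704),
    (14,832),(1062,1144),(206,1408),(78,1664),(1214,2288),(2510,2816),
    (2766,3328),(334,4576),(4558,9152),(7374,18304)}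

theorem coversAll_system36608 : CoversAll system36608 := by
  have hpow : ∀ i < 8, CoversClass system36608 (206 + 2 ^ i) (2 ^ (i + 1)) := by decide +kernel
  have h11 : ∀ j ∈ Finset.Ico (0 : ℤ) (11 : ℕ), j ∉ ({3, 6} : Finset ℤ) →
      CoversClass system36608 (206 + (2 ^ 8 : ℕ) * j) (2 ^ 8 * 11) := by decide +kernel
  have h13 : ∀ j ∈ Finset.Ico (0 : ℤ) (13 : ℕ), j ∉ ({2, 4, 7, 8} : Finset ℤ) →
      CoversClass system36608 (206 + (2 ^ 8 : ℕ) * j) (2 ^ 8 * 13) := by decide +kernel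
  have h143 : ∀ j ∈ Finset.Ico (0 : ℤ) (11 * 13 : ℕ),
      j % (11 : ℕ) ∈ ({3, 6} : Finset ℤ) ∧ j % (13 : ℕ) ∈ ({2, 4, 7, 8} : Finset ℤ) →
        CoversClass system36608 (206 + (2 ^ 8 : ℕ) * j) (2 ^ 8 * (11 * 13)) := by decide +kernel
  exact coversAll_of_coversClass_two_pow hpow
    (exists_coversClass_add_mul (by decide) (by decide) h11 h13 h143)

theorem distinctModuli_system36608 : DistinctModuli system36608 := by
  unfold DistinctModuli
  decide +kernel

theorem one_lt_and_dvd_of_mem_system36608 :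
    ∀ c ∈ system36608, 1 < c.2 ∧ c.2 ∣ 2 ^ 8 * 11 * 13 := by
  decide +kernel

theorem covering_for_36608 :
    CoversAll ({(1,2),(0,4),(2,8),(0,11),(2,13),(6,16),(20,22),(20,26),(30,32),
      (34,44),(6,52),(46,64),(14,88),(38,104),(14,128),(138,143),(62,176),
      (30,208),(78,256),(94,286),(142,352),(206,416),(226,572),(654,704),
      (14,832),(1062,1144),(206,1408),(78,1664),(1214,2288),(2510,2816),
      (2766,3328),(334,4576),(4558,9152),(7374,18304)} : Finset (ℕ × ℕ)) ∧
    IsCoveringNumber (2 ^ 8 * 11 * 13) :=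
  ⟨coversAll_system36608, system36608, coversAll_system36608, distinctModuli_system36608,
    one_lt_and_dvd_of_mem_system36608⟩
end

section
/- Let M = {2, 4, 5, 8, 10, 16, 20, 40, 80} (all divisors greater than 1 of 80). Then the number of covering systems of the integers whose set of moduli is exactly M equals (2!)^4 · 5! = 1920. -/
/-!
Let `q` be odd. The classes modulo `2, 4, …, 2 ^ n` always miss some class `u` modulo `2 ^ n`.
Inside that class a congruence modulo `q * 2 ^ e`, `e ≤ n`, covers either nothing or one class
modulo `q`, so `q` of them cover it only if their residues are distinct modulo `q` and all agree
with `u` modulo the power of two. When some `e` equals `n`, this determines `u`; so the missed class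
is unique, which forces the residue modulo `2 ^ i` to be `u + 2 ^ (i - 1)`. A covering therefore
amounts to a choice of `u` and of a bijection from the `q` moduli `q * 2 ^ e` onto `ZMod q`.
-/

open Function

section Reindexing

variable {ι : Type*} [Fintype ι]

/-- The system of congruences with residue `r i` modulo `m i`, as a set of pairs. -/
def congruenceSystem (m r : ι → ℕ) : Finset (ℕ × ℕ) :=
  Finset.univ.image fun i => (r i, m i)

lemma mem_congruenceSystem {m r : ι → ℕ} {c : ℕ × ℕ} :
    c ∈ congruenceSystem m r ↔ ∃ i, (r i, m i) = c := by
  simp [congruenceSystem]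

lemma image_snd_congruenceSystem (m r : ι → ℕ) :
    (congruenceSystem m r).image Prod.snd = Finset.univ.image m := by
  simp [congruenceSystem, Finset.image_image, comp_def]

lemma coversAll_congruenceSystem_iff {m r : ι → ℕ} :
    CoversAll (congruenceSystem m r) ↔ ∀ z : ℤ, ∃ i, (r i : ℤ) ≡ z [ZMOD m i] := by
  simp [CoversAll, congruenceSystem, Int.modEq_iff_dvd]

lemma distinctModuli_congruenceSystem {m : ι → ℕ} (hm : Injective m) (r : ι → ℕ) :
    DistinctModuli (congruenceSystem m r) := by
  intro c hc c' hc' h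
  obtain ⟨i, rfl⟩ := mem_congruenceSystem.1 hc
  obtain ⟨j, rfl⟩ := mem_congruenceSystem.1 hc'
  rw [hm h]

lemma congruenceSystem_injective {m : ι → ℕ} (hm : Injective m) :
    Injective (congruenceSystem m) := by
  intro r s h
  funext i
  have hi : (r i, m i) ∈ congruenceSystem m s := h ▸ mem_congruenceSystem.2 ⟨i, rfl⟩
  obtain ⟨j, hj⟩ := mem_congruenceSystem.1 hi
  obtain ⟨hrs, hij⟩ := Prod.mk.inj hj
  rw [← hrs, hm hij]

lemma DistinctModuli.exists_eq_congruenceSystem {S : Finset (ℕ × ℕ)} (hS : DistinctModuli S)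
    {m : ι → ℕ} (hM : S.image Prod.snd = Finset.univ.image m) :
    ∃ r, congruenceSystem m r = S := by
  have exists_residue (i : ι) : ∃ a, (a, m i) ∈ S := by
    have hi : m i ∈ S.image Prod.snd := hM ▸ Finset.mem_image_of_mem m (Finset.mem_univ i)
    simpa using hi
  choose r hr using exists_residue
  refine ⟨r, Finset.ext fun c => mem_congruenceSystem.trans ⟨?_, fun hc => ?_⟩⟩
  · rintro ⟨i, rfl⟩
    exact hr i
  · have hc' : c.2 ∈ Finset.univ.image m := hM ▸ Finset.mem_image_of_mem Prod.snd hc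
    obtain ⟨i, -, hi⟩ := Finset.mem_image.1 hc'
    exact ⟨i, hS _ (hr i) _ hc hi⟩

/-- The residue functions, with reduced values, of the covering systems with moduli `m`. -/
def coveringResidues (m : ι → ℕ) : Set (ι → ℕ) :=
  {r | (∀ i, r i < m i) ∧ ∀ z : ℤ, ∃ i, (r i : ℤ) ≡ z [ZMOD m i]}

theorem ncard_coverings_eq_ncard_coveringResidues {m : ι → ℕ} (hm : Injective m) :
    {S : Finset (ℕ × ℕ) | CoversAll S ∧ DistinctModuli S ∧ (∀ c ∈ S, c.1 < c.2) ∧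
      S.image Prod.snd = Finset.univ.image m}.ncard = (coveringResidues m).ncard := by
  rw [← Set.ncard_image_of_injective _ (congruenceSystem_injective hm)]
  congr 1
  ext S
  constructor
  · rintro ⟨hcov, hdist, hlt, hM⟩
    obtain ⟨r, rfl⟩ := hdist.exists_eq_congruenceSystem hM
    exact ⟨r, ⟨fun i => hlt _ (mem_congruenceSystem.2 ⟨i, rfl⟩),
      coversAll_congruenceSystem_iff.1 hcov⟩, rfl⟩
  · rintro ⟨r, ⟨hlt, hcov⟩, rfl⟩
    refine ⟨coversAll_congruenceSystem_iff.2 hcov, distinctModuli_congruenceSystem hm r, ?_,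
      image_snd_congruenceSystem m r⟩
    intro c hc
    obtain ⟨i, rfl⟩ := mem_congruenceSystem.1 hc
    exact hlt i

end Reindexing

section Dyadic

lemma modEq_two_pow_succ_or {k : ℕ} {u z : ℤ} (h : u ≡ z [ZMOD 2 ^ k]) :
    u ≡ z [ZMOD 2 ^ (k + 1)] ∨ u + 2 ^ k ≡ z [ZMOD 2 ^ (k + 1)] := by
  obtain ⟨t, ht⟩ := h.dvd
  obtain ⟨s, rfl⟩ | ⟨s, rfl⟩ := t.even_or_odd
  · exact .inl (Int.modEq_iff_dvd.2 ⟨s, by rw [ht]; ring⟩)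
  · exact .inr (Int.modEq_iff_dvd.2 ⟨s, by rw [← sub_sub, ht]; ring⟩)

lemma not_modEq_add_two_pow (k : ℕ) (u : ℤ) : ¬ u ≡ u + 2 ^ k [ZMOD 2 ^ (k + 1)] := by
  intro h
  have hdvd : (2 : ℤ) ^ (k + 1) ∣ 2 ^ k := by simpa using h.dvd
  have := (pow_dvd_pow_iff (by norm_num) (by decide)).1 hdvd
  omega

variable {n : ℕ} {x : Fin n → ℤ} {u z : ℤ}

/-- `z` lies in none of the classes of `x i` modulo `2 ^ (i + 1)`. -/
def AvoidsDyadic (x : Fin n → ℤ) (z : ℤ) : Prop :=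
  ∀ i, ¬ x i ≡ z [ZMOD 2 ^ (i.val + 1)]

lemma AvoidsDyadic.of_modEq (hu : AvoidsDyadic x u) (h : u ≡ z [ZMOD 2 ^ n]) :
    AvoidsDyadic x z :=
  fun i hi => hu i (hi.trans (h.symm.of_dvd (pow_dvd_pow 2 i.isLt)))

lemma exists_avoidsDyadic_modEq {k : ℕ}
    (hz : ∀ i : Fin n, i.val < k → ¬ x i ≡ z [ZMOD 2 ^ (i.val + 1)]) :
    ∃ u, z ≡ u [ZMOD 2 ^ k] ∧ AvoidsDyadic x u := by
  suffices h : ∀ l, k ≤ l → ∃ u, z ≡ u [ZMOD 2 ^ k] ∧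
      ∀ i : Fin n, i.val < l → ¬ x i ≡ u [ZMOD 2 ^ (i.val + 1)] by
    obtain ⟨u, hzu, hu⟩ := h (max k n) (le_max_left k n)
    exact ⟨u, hzu, fun i => hu i (i.isLt.trans_le (le_max_right k n))⟩
  intro l hkl
  induction l, hkl using Nat.le_induction with
  | base => exact ⟨z, .rfl, hz⟩
  | succ l hkl ih =>
    obtain ⟨u, hzu, hu⟩ := ih
    -- The class of `u` modulo `2 ^ l` splits in two,
    -- and the modulus `2 ^ (l + 1)` takes at most one half.
    by_cases hl : ∃ i : Fin n, i.val = l ∧ x i ≡ u [ZMOD 2 ^ (i.val + 1)]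
    · obtain ⟨i, rfl, hi⟩ := hl
      have add_modEq {d : ℕ} (hd : d ≤ i.val) : u ≡ u + 2 ^ i.val [ZMOD 2 ^ d] :=
        Int.modEq_iff_dvd.2 (by simpa using pow_dvd_pow (2 : ℤ) hd)
      refine ⟨u + 2 ^ i.val, hzu.trans (add_modEq hkl), fun j hj hxj => ?_⟩
      obtain hji | hji := Nat.lt_succ_iff_lt_or_eq.1 hj
      · exact hu j hji (hxj.trans (add_modEq hji).symm)
      · obtain rfl := Fin.ext hji
        exact not_modEq_add_two_pow _ _ (hi.symm.trans hxj)
    · refine ⟨u, hzu, fun j hj hxj => ?_⟩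
      obtain hjl | hjl := Nat.lt_succ_iff_lt_or_eq.1 hj
      · exact hu j hjl hxj
      · exact hl ⟨j, hjl, hxj⟩

lemma avoidsDyadic_iff_modEq (hx : ∀ i : Fin n, x i ≡ u + 2 ^ i.val [ZMOD 2 ^ (i.val + 1)]) :
    AvoidsDyadic x z ↔ u ≡ z [ZMOD 2 ^ n] := by
  refine ⟨fun hz => ?_, AvoidsDyadic.of_modEq fun i hi =>
    not_modEq_add_two_pow i u (hi.symm.trans (hx i))⟩
  suffices h : ∀ k ≤ n, u ≡ z [ZMOD 2 ^ k] from h n le_rfl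
  intro k hk
  induction k with
  | zero => simpa using Int.modEq_one
  | succ k ih =>
    exact (modEq_two_pow_succ_or (ih (by omega))).resolve_right
      fun h => hz ⟨k, hk⟩ ((hx ⟨k, hk⟩).trans h)

lemma modEq_add_two_pow_of_avoidsDyadic_unique (hu : AvoidsDyadic x u)
    (huniq : ∀ v, AvoidsDyadic x v → u ≡ v [ZMOD 2 ^ n]) (i : Fin n) :
    x i ≡ u + 2 ^ i.val [ZMOD 2 ^ (i.val + 1)] := by
  by_contra hi
  have avoids : ∀ j : Fin n, j.val < i + 1 →
      ¬ x j ≡ u + 2 ^ i.val [ZMOD 2 ^ (j.val + 1)] := by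
    intro j hj hxj
    obtain hji | hji := Nat.lt_succ_iff_lt_or_eq.1 hj
    · refine hu j (hxj.trans (Int.modEq_iff_dvd.2 ?_))
      simpa using pow_dvd_pow (2 : ℤ) hji
    · obtain rfl := Fin.ext hji
      exact hi hxj
  obtain ⟨v, huv, hv⟩ := exists_avoidsDyadic_modEq avoids
  have hvu : u ≡ v [ZMOD 2 ^ (i.val + 1)] := (huniq v hv).of_dvd (pow_dvd_pow 2 i.isLt)
  exact not_modEq_add_two_pow i u (hvu.trans huv.symm)

end Dyadic

section Classification

variable {n q : ℕ} {κ : Type*} [Fintype κ] {e : κ → ℕ}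

lemma modEq_mul_two_pow_iff (hq : Odd q) {k : ℕ} {a b : ℤ} :
    a ≡ b [ZMOD q * 2 ^ k] ↔ a ≡ b [ZMOD 2 ^ k] ∧ (a : ZMod q) = b := by
  have hcop : Nat.Coprime (q : ℤ).natAbs ((2 : ℤ) ^ k).natAbs := by
    simpa [Int.natAbs_pow] using (Nat.coprime_two_right.2 hq).pow_right k
  rw [← Int.modEq_and_modEq_iff_modEq_mul hcop, ZMod.intCast_eq_intCast_iff, and_comm]

lemma exists_modEq_two_pow_and_cast_eq (hq : Odd q) (k : ℕ) (u : ℤ) (c : ZMod q) :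
    ∃ z : ℤ, u ≡ z [ZMOD 2 ^ k] ∧ (z : ZMod q) = c := by
  have hcop : Nat.Coprime (2 ^ k) q := (Nat.coprime_two_left.2 hq).pow_left k
  obtain ⟨z, hz⟩ := ((ZMod.chineseRemainder hcop).surjective.comp ZMod.intCast_surjective) (u, c)
  obtain ⟨hzu, hzc⟩ : (z : ZMod (2 ^ k)) = u ∧ (z : ZMod q) = c := by
    simpa [Prod.ext_iff] using hz
  refine ⟨z, ?_, hzc⟩
  exact_mod_cast (ZMod.intCast_eq_intCast_iff _ _ _).1 hzu.symm

lemma covers_class_iff (hq : Odd q) (hcard : Fintype.card κ = q) (he : ∀ j, e j ≤ n)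
    {y : κ → ℤ} {u : ℤ} :
    (∀ z, u ≡ z [ZMOD 2 ^ n] → ∃ j, y j ≡ z [ZMOD q * 2 ^ e j]) ↔
      (∀ j, y j ≡ u [ZMOD 2 ^ e j]) ∧ Bijective fun j => (y j : ZMod q) := by
  have : NeZero q := ⟨hq.pos.ne'⟩
  constructor
  · intro hcov
    have hit (c : ZMod q) : ∃ j, y j ≡ u [ZMOD 2 ^ e j] ∧ (y j : ZMod q) = c := by
      obtain ⟨z, huz, rfl⟩ := exists_modEq_two_pow_and_cast_eq hq n u c
      obtain ⟨j, hj⟩ := hcov z huz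
      obtain ⟨hj₂, hjq⟩ := (modEq_mul_two_pow_iff hq).1 hj
      exact ⟨j, hj₂.trans (huz.symm.of_dvd (pow_dvd_pow 2 (he j))), hjq⟩
    have hbij : Bijective fun j => (y j : ZMod q) :=
      (Fintype.bijective_iff_surjective_and_card _).2
        ⟨fun c => (hit c).imp fun _ => And.right, by rw [hcard, ZMod.card]⟩
    refine ⟨fun j => ?_, hbij⟩
    obtain ⟨i, hi, hij⟩ := hit (y j)
    exact hbij.injective hij ▸ hi
  · rintro ⟨hy, hbij⟩ z huz
    obtain ⟨j, hj⟩ := hbij.surjective (z : ZMod q)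
    exact ⟨j, (modEq_mul_two_pow_iff hq).2
      ⟨(hy j).trans (huz.of_dvd (pow_dvd_pow 2 (he j))), hj⟩⟩

theorem covers_iff_exists_class (hq : Odd q) (hcard : Fintype.card κ = q) (he : ∀ j, e j ≤ n)
    {t : κ} (ht : e t = n) {x : Fin n → ℤ} {y : κ → ℤ} :
    (∀ z, (∃ i : Fin n, x i ≡ z [ZMOD 2 ^ (i.val + 1)]) ∨ ∃ j, y j ≡ z [ZMOD q * 2 ^ e j]) ↔
      ∃ u, (∀ i : Fin n, x i ≡ u + 2 ^ i.val [ZMOD 2 ^ (i.val + 1)]) ∧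
        (∀ j, y j ≡ u [ZMOD 2 ^ e j]) ∧ Bijective fun j => (y j : ZMod q) := by
  constructor
  · intro hcov
    have classify {v : ℤ} (hv : AvoidsDyadic x v) :
        (∀ j, y j ≡ v [ZMOD 2 ^ e j]) ∧ Bijective fun j => (y j : ZMod q) :=
      (covers_class_iff hq hcard he).1 fun z hvz =>
        (hcov z).resolve_left fun ⟨i, hi⟩ => hv.of_modEq hvz i hi
    obtain ⟨u, -, hu⟩ := exists_avoidsDyadic_modEq (x := x) (z := 0) (k := 0) (by simp)
    refine ⟨u, modEq_add_two_pow_of_avoidsDyadic_unique hu fun v hv => ?_, classify hu⟩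
    exact ht ▸ ((classify hu).1 t).symm.trans ((classify hv).1 t)
  · rintro ⟨u, hx, hy⟩ z
    by_cases huz : u ≡ z [ZMOD 2 ^ n]
    · exact .inr ((covers_class_iff hq hcard he).2 hy z huz)
    · left
      simpa [AvoidsDyadic] using mt (avoidsDyadic_iff_modEq hx).1 huz

end Classification

section Counting

variable {n q : ℕ} {κ : Type*} {e : κ → ℕ}

lemma eq_of_forall_modEq {ι : Type*} {m r s : ι → ℕ} (hr : ∀ i, r i < m i) (hs : ∀ i, s i < m i)
    (h : ∀ i, (r i : ℤ) ≡ s i [ZMOD m i]) : r = s :=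
  funext fun i => (Int.natCast_modEq_iff.1 (h i)).eq_of_lt_of_lt (hr i) (hs i)

/-- The moduli `2 ^ (i + 1)` for `i < n`, followed by the moduli `q * 2 ^ e j`. -/
def dyadicModulus (n q : ℕ) (e : κ → ℕ) : Fin n ⊕ κ → ℕ :=
  Sum.elim (fun i => 2 ^ (i.val + 1)) fun j => q * 2 ^ e j

lemma dyadicModulus_injective (hq : Odd q) (hq₁ : q ≠ 1) (he : Injective e) :
    Injective (dyadicModulus n q e) := by
  refine Injective.sumElim (fun i j hij => Fin.ext ?_) (fun i j hij => he ?_) fun i j hij => hq₁ ?_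
  · simpa using Nat.pow_right_injective le_rfl hij
  · exact Nat.pow_right_injective le_rfl (Nat.eq_of_mul_eq_mul_left hq.pos hij)
  · exact Nat.Coprime.eq_one_of_dvd ((Nat.coprime_two_right.2 hq).pow_right (i + 1))
      (hij ▸ dvd_mul_right q _)

/-- The reduced residues, for the moduli `dyadicModulus n q e`, of the covering in which the powers
of two miss exactly the class `u` and the modulus `q * 2 ^ e j` covers its part that is congruent to
`σ j` modulo `q`. -/
def coveringResidue (hq : Odd q) (e : κ → ℕ) (p : ZMod (2 ^ n) × (κ ≃ ZMod q)) : Fin n ⊕ κ → ℕ :=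
  Sum.elim (fun i => (p.1.val + 2 ^ i.val) % 2 ^ (i.val + 1)) fun j =>
    Nat.chineseRemainder ((Nat.coprime_two_right.2 hq).pow_right (e j)) (p.2 j).val p.1.val

lemma coveringResidue_lt (hq : Odd q) (p : ZMod (2 ^ n) × (κ ≃ ZMod q)) (i : Fin n ⊕ κ) :
    coveringResidue hq e p i < dyadicModulus n q e i := by
  rcases i with i | j
  · exact Nat.mod_lt _ (by positivity)
  · exact Nat.chineseRemainder_lt_mul _ _ _ hq.pos.ne' (by positivity)

lemma coveringResidue_inl_modEq (hq : Odd q) (p : ZMod (2 ^ n) × (κ ≃ ZMod q)) (i : Fin n) :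
    (coveringResidue hq e p (.inl i) : ℤ) ≡ p.1.val + 2 ^ i.val [ZMOD 2 ^ (i.val + 1)] := by
  exact_mod_cast Int.natCast_modEq_iff.2 (Nat.mod_modEq _ _)

lemma coveringResidue_inr_modEq (hq : Odd q) (p : ZMod (2 ^ n) × (κ ≃ ZMod q)) (j : κ) :
    (coveringResidue hq e p (.inr j) : ℤ) ≡ p.1.val [ZMOD 2 ^ e j] := by
  exact_mod_cast Int.natCast_modEq_iff.2 (Nat.chineseRemainder _ _ _).2.2

lemma cast_coveringResidue_inr (hq : Odd q) (p : ZMod (2 ^ n) × (κ ≃ ZMod q)) (j : κ) :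
    ((coveringResidue hq e p (.inr j) : ℤ) : ZMod q) = p.2 j := by
  have : NeZero q := ⟨hq.pos.ne'⟩
  have h : (coveringResidue hq e p (.inr j) : ZMod q) = (p.2 j).val :=
    (ZMod.natCast_eq_natCast_iff _ _ _).2 (Nat.chineseRemainder _ _ _).2.1
  simpa using h

lemma coveringResidue_injective (hq : Odd q) {t : κ} (ht : e t = n) :
    Injective (coveringResidue (n := n) hq e) := by
  intro p p' h
  have hval : (p.1.val : ℤ) ≡ p'.1.val [ZMOD 2 ^ n] := by
    have h' := coveringResidue_inr_modEq (e := e) hq p' t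
    rw [← h] at h'
    exact ht ▸ (coveringResidue_inr_modEq hq p t).symm.trans h'
  refine Prod.ext ?_ (Equiv.ext fun j => ?_)
  · have hcast : ((p.1.val : ℤ) : ZMod (2 ^ n)) = (p'.1.val : ℤ) :=
      (ZMod.intCast_eq_intCast_iff _ _ _).2 (by simpa using hval)
    simpa using hcast
  · rw [← cast_coveringResidue_inr (e := e) hq p, h, cast_coveringResidue_inr]

lemma mem_coveringResidues_dyadicModulus_iff [Fintype κ] (hq : Odd q) (hcard : Fintype.card κ = q)
    (he : ∀ j, e j ≤ n) {t : κ} (ht : e t = n) {r : Fin n ⊕ κ → ℕ} :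
    r ∈ coveringResidues (dyadicModulus n q e) ↔ (∀ i, r i < dyadicModulus n q e i) ∧
      ∃ u : ℤ, (∀ i : Fin n, (r (.inl i) : ℤ) ≡ u + 2 ^ i.val [ZMOD 2 ^ (i.val + 1)]) ∧
        (∀ j, (r (.inr j) : ℤ) ≡ u [ZMOD 2 ^ e j]) ∧
          Bijective fun j => ((r (.inr j) : ℤ) : ZMod q) := by
  rw [← covers_iff_exists_class hq hcard he ht]
  simp [coveringResidues, dyadicModulus]

lemma coveringResidues_dyadicModulus_eq_range [Fintype κ] (hq : Odd q)
    (hcard : Fintype.card κ = q) (he : ∀ j, e j ≤ n) {t : κ} (ht : e t = n) :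
    coveringResidues (dyadicModulus n q e) = Set.range (coveringResidue (n := n) hq e) := by
  ext r
  rw [mem_coveringResidues_dyadicModulus_iff hq hcard he ht]
  constructor
  · rintro ⟨hlt, u, hx, hy, hbij⟩
    have hu : (((u : ZMod (2 ^ n)).val : ℕ) : ℤ) ≡ u [ZMOD 2 ^ n] := by
      rw [ZMod.val_intCast]
      exact_mod_cast Int.mod_modEq u (2 ^ n)
    let p : ZMod (2 ^ n) × (κ ≃ ZMod q) := (u, Equiv.ofBijective _ hbij)
    refine ⟨p, eq_of_forall_modEq (coveringResidue_lt hq p) hlt ?_⟩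
    rintro (i | j)
    · have hi := (hu.of_dvd (pow_dvd_pow 2 i.isLt)).add_right (2 ^ i.val)
      simpa [dyadicModulus] using
        ((coveringResidue_inl_modEq hq p i).trans hi).trans (hx i).symm
    · have hj := hu.of_dvd (pow_dvd_pow 2 (he j))
      simpa [dyadicModulus] using (modEq_mul_two_pow_iff hq).2
        ⟨((coveringResidue_inr_modEq hq p j).trans hj).trans (hy j).symm,
          cast_coveringResidue_inr hq p j⟩
  · rintro ⟨p, rfl⟩
    refine ⟨coveringResidue_lt hq p, p.1.val, coveringResidue_inl_modEq hq p,
      coveringResidue_inr_modEq hq p, ?_⟩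
    simpa only [cast_coveringResidue_inr] using p.2.bijective

theorem ncard_coveringResidues_dyadicModulus [Fintype κ] (hq : Odd q) (hcard : Fintype.card κ = q)
    (he : ∀ j, e j ≤ n) {t : κ} (ht : e t = n) :
    (coveringResidues (dyadicModulus n q e)).ncard = 2 ^ n * q.factorial := by
  classical
  have : NeZero q := ⟨hq.pos.ne'⟩
  have hκ : Fintype.card κ = Fintype.card (ZMod q) := by rw [hcard, ZMod.card]
  rw [coveringResidues_dyadicModulus_eq_range hq hcard he ht,
    Set.ncard_range_of_injective (coveringResidue_injective hq ht), Nat.card_prod, Nat.card_zmod,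
    Nat.card_eq_fintype_card, Fintype.card_equiv (Fintype.equivOfCardEq hκ), hcard]

end Counting

lemma image_dyadicModulus (n q : ℕ) (E : Finset ℕ) :
    Finset.univ.image (dyadicModulus n q ((↑) : E → ℕ)) =
      (Finset.Icc 1 n).image (2 ^ ·) ∪ E.image (q * 2 ^ ·) := by
  ext m
  simp only [dyadicModulus, Finset.mem_image, Finset.mem_univ, true_and, Sum.exists, Sum.elim_inl,
    Sum.elim_inr, Subtype.exists, Fin.exists_iff, Finset.mem_union, Finset.mem_Icc, exists_prop]
  refine or_congr_left ⟨?_, ?_⟩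
  · rintro ⟨i, hi, rfl⟩
    exact ⟨i + 1, by omega, rfl⟩
  · rintro ⟨i, hi, rfl⟩
    exact ⟨i - 1, by omega, by rw [Nat.sub_add_cancel hi.1]⟩

/- The divisors greater than `1` of `2 ^ (q - 1) * q`, for an odd prime `q`, are the case
`E = Finset.range q`, `n = q - 1`. -/
theorem number_of_coverings_with_moduli_of_80_general {n q : ℕ} {E : Finset ℕ} (hq : Odd q)
    (hq₁ : q ≠ 1) (hcard : E.card = q) (hn : IsGreatest (E : Set ℕ) n) :
    {S : Finset (ℕ × ℕ) | CoversAll S ∧ DistinctModuli S ∧ (∀ c ∈ S, c.1 < c.2) ∧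
      S.image Prod.snd = (Finset.Icc 1 n).image (2 ^ ·) ∪ E.image (q * 2 ^ ·)}.ncard =
      2 ^ n * q.factorial := by
  rw [← image_dyadicModulus, ncard_coverings_eq_ncard_coveringResidues
    (dyadicModulus_injective hq hq₁ Subtype.val_injective)]
  exact ncard_coveringResidues_dyadicModulus hq (by simpa using hcard)
    (fun j => hn.2 j.2) (t := ⟨n, hn.1⟩) rfl

theorem number_of_coverings_with_moduli_of_80 :
    {S : Finset (ℕ × ℕ) | CoversAll S ∧ DistinctModuli S ∧
      (∀ c ∈ S, c.1 < c.2) ∧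
      S.image Prod.snd = ({2, 4, 5, 8, 10, 16, 20, 40, 80} : Finset ℕ)}.ncard =
      1920 := by
  have hM : ({2, 4, 5, 8, 10, 16, 20, 40, 80} : Finset ℕ) =
      (Finset.Icc 1 4).image (2 ^ ·) ∪ (Finset.range 5).image (5 * 2 ^ ·) := by decide
  have hgreatest : IsGreatest (Finset.range 5 : Set ℕ) 4 :=
    ⟨by simp, fun i hi => Nat.le_of_lt_succ (Finset.mem_range.1 hi)⟩
  rw [hM, number_of_coverings_with_moduli_of_80_general (by decide) (by decide)
    (Finset.card_range 5) hgreatest]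
  rfl
end
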